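/- The non-HARA utility U(x) = (1/3)·H(x)^{−3} + H(x)^{−1} + x·H(x) satisfies the utility conditions: it is strictly increasing and strictly concave on (0,∞), lim_{x→0+} U(x) = 0, lim_{x→∞} U(x) = +∞, lim_{x→0+} U'(x) = +∞, lim_{x→∞} U'(x) = 0, and there exists a constant C > 0 such that U(x) ≤ C·(1 + x^{3/4}) for all x > 0. -/

import Mathlib

open Set Filter

/-!
The utility is given through Legendre duality: with `V y = y⁻³ / 3 + y⁻¹` and
`I y = -V' y = y⁻⁴ + y⁻²`, the function `H` inverts `I` and `U x = V (H x) + x * H x`. The two terms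
containing `H'` cancel in `U'`, leaving `U' = H`, so monotonicity, concavity and the limits of `U'`
are read off from `H`. Substituting `x = I (H x)` gives `U = 4/3 * H⁻³ + 2 * H⁻¹`, which yields
the limits of `U`, and `H⁻⁴ ≤ x` bounds its growth by `x ^ (3/4)`.
-/

open scoped Topology

theorem hasDerivAt_comp_add_id_mul {𝕜 : Type*} [NontriviallyNormedField 𝕜] {V H : 𝕜 → 𝕜} {x : 𝕜}
    (hV : HasDerivAt V (-x) (H x)) (hH : DifferentiableAt 𝕜 H x) :
    HasDerivAt (fun t ↦ V (H t) + t * H t) (H x) x := by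
  have hcomp : HasDerivAt (fun t ↦ V (H t)) (-x * deriv H x) x := hV.comp x hH.hasDerivAt
  have hmul : HasDerivAt (fun t ↦ t * H t) (1 * H x + x * deriv H x) x :=
    (hasDerivAt_id' x).mul hH.hasDerivAt
  exact (hcomp.add hmul).congr_deriv (by ring)

theorem strictMonoOn_of_hasDerivAt_pos {f f' : ℝ → ℝ} {s : Set ℝ} (hs : Convex ℝ s)
    (hf : ∀ x ∈ s, HasDerivAt f (f' x) x) (hpos : ∀ x ∈ s, 0 < f' x) : StrictMonoOn f s :=
  strictMonoOn_of_hasDerivWithinAt_pos hs (HasDerivAt.continuousOn hf)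
    (fun x hx ↦ (hf x (interior_subset hx)).hasDerivWithinAt)
    fun x hx ↦ hpos x (interior_subset hx)

theorem strictConcaveOn_of_hasDerivAt_strictAntiOn {f f' : ℝ → ℝ} {s : Set ℝ} (hs : Convex ℝ s)
    (hf : ∀ x ∈ s, HasDerivAt f (f' x) x) (hf' : StrictAntiOn f' s) : StrictConcaveOn ℝ s f := by
  have hderiv : EqOn f' (deriv f) (interior s) := fun x hx ↦ (hf x (interior_subset hx)).deriv.symm
  exact ((hf'.mono interior_subset).congr hderiv).strictConcaveOn_of_deriv hs
    (HasDerivAt.continuousOn hf)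

theorem pow_le_rpow_div_of_pow_le {a x : ℝ} {m n : ℕ} (hn : n ≠ 0) (ha : 0 ≤ a) (h : a ^ n ≤ x) :
    a ^ m ≤ x ^ (m / n : ℝ) :=
  calc a ^ m = (a ^ n) ^ (m / n : ℝ) := by
        rw [← Real.rpow_natCast_mul ha, mul_div_cancel₀ _ (Nat.cast_ne_zero.2 hn),
          Real.rpow_natCast]
    _ ≤ x ^ (m / n : ℝ) := Real.rpow_le_rpow (pow_nonneg ha n) h (by positivity)

theorem le_one_add_pow {R : Type*} [Semiring R] [LinearOrder R] [IsStrictOrderedRing R] {a : R}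
    {n : ℕ} (hn : n ≠ 0) (ha : 0 ≤ a) : a ≤ 1 + a ^ n := by
  rcases le_total a 1 with h | h
  · exact h.trans (le_add_of_nonneg_right (pow_nonneg ha n))
  · exact (le_self_pow₀ h hn).trans (le_add_of_nonneg_left zero_le_one)

namespace NonHARA

/-- The marginal utility, called `H` in the theorem. It has junk value `0` for `x ≤ 0`. -/
noncomputable def marginal (x : ℝ) : ℝ := √(2 / (-1 + √(1 + 4 * x)))

/-- The convex conjugate `V y = sup_x (U x - x * y)` of the utility, in closed form for `0 < y`. -/
noncomputable def conjugate (y : ℝ) : ℝ := 1 / 3 * y ^ (-3 : ℤ) + y⁻¹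

/-- The inverse marginal utility `I = -V'`, where `V` is the conjugate. -/
noncomputable def inverseMarginal (y : ℝ) : ℝ := y⁻¹ ^ 4 + y⁻¹ ^ 2

/-- The non-HARA utility, recovered from its conjugate: the infimum of `V y + x * y` over `0 < y`
is attained at the marginal utility. -/
noncomputable def utility (x : ℝ) : ℝ := conjugate (marginal x) + x * marginal x

theorem hasDerivAt_conjugate {y : ℝ} (hy : y ≠ 0) :
    HasDerivAt conjugate (-inverseMarginal y) y := by
  have hcube : HasDerivAt (fun t : ℝ ↦ t ^ (-3 : ℤ)) (-3 * y⁻¹ ^ 4) y :=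
    (hasDerivAt_zpow (-3) y (.inl hy)).congr_deriv (by norm_num [zpow_neg])
  refine ((hcube.const_mul (1 / 3)).add (hasDerivAt_inv hy)).congr_deriv ?_
  rw [inverseMarginal]
  ring

theorem conjugate_add_inverseMarginal_mul {y : ℝ} (hy : y ≠ 0) :
    conjugate y + inverseMarginal y * y = 4 / 3 * y⁻¹ ^ 3 + 2 * y⁻¹ := by
  simp only [conjugate, inverseMarginal]
  field_simp
  ring

variable {x : ℝ}

theorem neg_one_add_sqrt_pos (hx : 0 < x) : 0 < -1 + √(1 + 4 * x) := by
  have : 1 < √(1 + 4 * x) := Real.lt_sqrt_of_sq_lt (by linarith)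
  linarith

theorem marginal_pos (hx : 0 < x) : 0 < marginal x :=
  Real.sqrt_pos.2 (div_pos two_pos (neg_one_add_sqrt_pos hx))

theorem inv_marginal_sq (hx : 0 < x) : (marginal x)⁻¹ ^ 2 = (-1 + √(1 + 4 * x)) / 2 := by
  rw [inv_pow, marginal, Real.sq_sqrt (div_pos two_pos (neg_one_add_sqrt_pos hx)).le, inv_div]

theorem inverseMarginal_marginal (hx : 0 < x) : inverseMarginal (marginal x) = x := by
  have hsqrt : √(1 + 4 * x) ^ 2 = 1 + 4 * x := Real.sq_sqrt (by linarith)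
  rw [inverseMarginal, pow_mul _ 2 2, inv_marginal_sq hx]
  linarith

theorem differentiableAt_marginal (hx : 0 < x) : DifferentiableAt ℝ marginal x := by
  have hpos := neg_one_add_sqrt_pos hx
  have hinner : DifferentiableAt ℝ (fun t : ℝ ↦ √(1 + 4 * t)) x :=
    DifferentiableAt.sqrt (by fun_prop) (by positivity)
  exact ((differentiableAt_const 2).div (hinner.const_add (-1)) hpos.ne').sqrt
    (div_pos two_pos hpos).ne'

theorem strictAntiOn_marginal : StrictAntiOn marginal (Ioi 0) := by
  intro x (hx : 0 < x) y (hy : 0 < y) hxy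
  have hdenom : -1 + √(1 + 4 * x) < -1 + √(1 + 4 * y) := by gcongr
  exact Real.sqrt_lt_sqrt (div_pos two_pos (neg_one_add_sqrt_pos hy)).le
    (div_lt_div_of_pos_left two_pos (neg_one_add_sqrt_pos hx) hdenom)

theorem tendsto_marginal_nhdsGT_zero : Tendsto marginal (𝓝[>] 0) atTop := by
  have hzero : Tendsto (fun x : ℝ ↦ -1 + √(1 + 4 * x)) (𝓝[>] 0) (𝓝 0) :=
    ((by fun_prop : Continuous fun x : ℝ ↦ -1 + √(1 + 4 * x)).tendsto' 0 0 (by simp)).mono_left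
      nhdsWithin_le_nhds
  have hpos : Tendsto (fun x : ℝ ↦ -1 + √(1 + 4 * x)) (𝓝[>] 0) (𝓝[>] 0) :=
    tendsto_nhdsWithin_iff.2
      ⟨hzero, eventually_mem_nhdsWithin.mono fun _ hx ↦ neg_one_add_sqrt_pos hx⟩
  exact Real.tendsto_sqrt_atTop.comp (hpos.inv_tendsto_nhdsGT_zero.const_mul_atTop two_pos)

theorem tendsto_marginal_atTop : Tendsto marginal atTop (𝓝[>] 0) := by
  have hlin : Tendsto (fun x : ℝ ↦ 1 + 4 * x) atTop atTop :=
    tendsto_atTop_add_const_left _ _ (tendsto_id.const_mul_atTop four_pos)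
  have hdenom : Tendsto (fun x : ℝ ↦ -1 + √(1 + 4 * x)) atTop atTop :=
    tendsto_atTop_add_const_left _ _ (Real.tendsto_sqrt_atTop.comp hlin)
  have hzero : Tendsto marginal atTop (𝓝 0) := by
    rw [← Real.sqrt_zero]
    exact (hdenom.const_div_atTop 2).sqrt
  exact tendsto_nhdsWithin_iff.2 ⟨hzero, (eventually_gt_atTop 0).mono fun _ ↦ marginal_pos⟩

theorem hasDerivAt_utility (hx : 0 < x) : HasDerivAt utility (marginal x) x := by
  have hconj := hasDerivAt_conjugate (marginal_pos hx).ne'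
  rw [inverseMarginal_marginal hx] at hconj
  exact hasDerivAt_comp_add_id_mul hconj (differentiableAt_marginal hx)

theorem utility_eq_inv_marginal (hx : 0 < x) :
    utility x = 4 / 3 * (marginal x)⁻¹ ^ 3 + 2 * (marginal x)⁻¹ := by
  rw [← conjugate_add_inverseMarginal_mul (marginal_pos hx).ne', inverseMarginal_marginal hx,
    utility]

theorem tendsto_utility_nhdsGT_zero : Tendsto utility (𝓝[>] 0) (𝓝 0) := by
  have hinv : Tendsto (fun x ↦ (marginal x)⁻¹) (𝓝[>] 0) (𝓝 0) :=
    tendsto_marginal_nhdsGT_zero.inv_tendsto_atTop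
  have hlim : Tendsto (fun x ↦ 4 / 3 * (marginal x)⁻¹ ^ 3 + 2 * (marginal x)⁻¹) (𝓝[>] 0) (𝓝 0) := by
    simpa using ((hinv.pow 3).const_mul (4 / 3)).add (hinv.const_mul 2)
  exact hlim.congr' (eventually_mem_nhdsWithin.mono fun _ hx ↦ (utility_eq_inv_marginal hx).symm)

theorem inv_marginal_le_utility (hx : 0 < x) : (marginal x)⁻¹ ≤ utility x := by
  have hinv : 0 < (marginal x)⁻¹ := inv_pos.2 (marginal_pos hx)
  have hcube : 0 < (marginal x)⁻¹ ^ 3 := pow_pos hinv 3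
  rw [utility_eq_inv_marginal hx]
  linarith

theorem tendsto_utility_atTop : Tendsto utility atTop atTop :=
  tendsto_atTop_mono' _ ((eventually_gt_atTop 0).mono fun _ ↦ inv_marginal_le_utility)
    tendsto_marginal_atTop.inv_tendsto_nhdsGT_zero

theorem utility_le_four_mul_one_add_rpow (hx : 0 < x) : utility x ≤ 4 * (1 + x ^ (3 / 4 : ℝ)) := by
  have hinv : 0 < (marginal x)⁻¹ := inv_pos.2 (marginal_pos hx)
  have hfour : (marginal x)⁻¹ ^ 4 ≤ x :=
    (le_add_of_nonneg_right (sq_nonneg _)).trans_eq (inverseMarginal_marginal hx)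
  have hcube : (marginal x)⁻¹ ^ 3 ≤ x ^ (3 / 4 : ℝ) :=
    mod_cast pow_le_rpow_div_of_pow_le (m := 3) four_ne_zero hinv.le hfour
  have hrpow : 0 ≤ x ^ (3 / 4 : ℝ) := Real.rpow_nonneg hx.le _
  calc utility x = 4 / 3 * (marginal x)⁻¹ ^ 3 + 2 * (marginal x)⁻¹ := utility_eq_inv_marginal hx
    _ ≤ 4 / 3 * (marginal x)⁻¹ ^ 3 + 2 * (1 + (marginal x)⁻¹ ^ 3) := by
        gcongr
        exact le_one_add_pow three_ne_zero hinv.le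
    _ ≤ 4 * (1 + x ^ (3 / 4 : ℝ)) := by linarith

end NonHARA

open NonHARA

/-- The non-HARA utility satisfies the utility conditions: strictly increasing, strictly
concave on `(0,∞)`, with `U → 0` at `0+`, `U → ∞` at `∞`, `U' → ∞` at `0+`, `U' → 0` at `∞`,
and polynomial growth of order `3/4`. -/
theorem nonHARA_utility_conditions
    (H U : ℝ → ℝ)
    (hH : ∀ x : ℝ, H x = Real.sqrt (2 / (-1 + Real.sqrt (1 + 4 * x))))
    (hU : ∀ x : ℝ, U x = (1 / 3) * (H x) ^ (-3 : ℤ) + (H x)⁻¹ + x * H x) :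
    StrictMonoOn U (Ioi 0) ∧
    StrictConcaveOn ℝ (Ioi 0) U ∧
    Tendsto U (nhdsWithin 0 (Ioi 0)) (nhds 0) ∧
    Tendsto U atTop atTop ∧
    Tendsto (deriv U) (nhdsWithin 0 (Ioi 0)) atTop ∧
    Tendsto (deriv U) atTop (nhds 0) ∧
    ∃ C : ℝ, 0 < C ∧ ∀ x : ℝ, 0 < x → U x ≤ C * (1 + x ^ (3 / 4 : ℝ)) := by
  obtain rfl : H = marginal := funext hH
  obtain rfl : U = utility := funext hU
  have hderiv : ∀ x ∈ Ioi (0 : ℝ), HasDerivAt utility (marginal x) x :=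
    fun _ ↦ hasDerivAt_utility
  have hderiv_eq : ∀ x ∈ Ioi (0 : ℝ), marginal x = deriv utility x :=
    fun x hx ↦ (hderiv x hx).deriv.symm
  exact ⟨strictMonoOn_of_hasDerivAt_pos (convex_Ioi 0) hderiv fun _ ↦ marginal_pos,
    strictConcaveOn_of_hasDerivAt_strictAntiOn (convex_Ioi 0) hderiv strictAntiOn_marginal,
    tendsto_utility_nhdsGT_zero,
    tendsto_utility_atTop,
    tendsto_marginal_nhdsGT_zero.congr' (eventually_mem_nhdsWithin.mono hderiv_eq),
    (tendsto_marginal_atTop.mono_right nhdsWithin_le_nhds).congr'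
      ((eventually_gt_atTop 0).mono hderiv_eq),
    4, four_pos, fun _ ↦ utility_le_four_mul_one_add_rpow⟩
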